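/- Let X be a positive real-valued random variable with continuous probability density function f that is strictly positive on (0,∞), cumulative distribution function F, quantile function Q, and 0 < E[X] < ∞. Then the following are equivalent: (i) there exists t > 0 with F(t) > 0 and ∫₀^t (1 − F(s)) ds < F(t)·E[X]; (ii) there exists p ∈ (0,1) with (1 − p)·Q(p) + ∫₀^p Q(u) du < p·E[X]. -/

import Mathlib

open MeasureTheory Filter Set Topology ProbabilityTheory

/-!
For every distribution on `[0, ∞)` with cdf `F` and quantile function `Q`, and every `0 < p < 1`,
`(1 - p) Q(p) + ∫₀ᵖ Q = ∫₀^{Q(p)} (1 - F)`: the layer-cake formula and the Galois connection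
`Q(u) ≤ s ↔ u ≤ F(s)` turn `∫₀ᵖ Q` into `∫₀^{Q(p)} (p - F)`. A restart time `t` with `F(t) < 1`
therefore gives the level `p = F(t)`, as `Q(F(t)) ≤ t`. Conversely a level `p` gives all restart
times slightly above `Q(p)`, where `F ≥ p`. A restart time with `F(t) = 1` is never useful, since
then `∫₀ᵗ (1 - F) = E[X]`.
-/

section

variable {μ : Measure ℝ} {p t : ℝ}

/-- The quantile function `Q(p) = inf {t | p ≤ F(t)}` of the distribution `μ` with cdf `F`. For `p`
outside `(0, 1)` the set may be empty or unbounded below, and then the value is the junk value `0`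
of `sInf`. -/
noncomputable def quantile (μ : Measure ℝ) (p : ℝ) : ℝ :=
  sInf {t : ℝ | p ≤ cdf μ t}

theorem bddBelow_setOf_le_cdf (hp : 0 < p) : BddBelow {t : ℝ | p ≤ cdf μ t} := by
  obtain ⟨b, hb⟩ := ((tendsto_cdf_atBot μ).eventually_lt_const hp).exists
  exact ⟨b, fun t ht ↦ ((monotone_cdf μ).reflect_lt (hb.trans_le ht)).le⟩

theorem nonempty_setOf_le_cdf (hp : p < 1) : {t : ℝ | p ≤ cdf μ t}.Nonempty :=
  ((tendsto_cdf_atTop μ).eventually_const_le hp).exists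

theorem le_cdf_of_quantile_lt (hp : p < 1) (h : quantile μ p < t) : p ≤ cdf μ t := by
  obtain ⟨s, hs, hst⟩ := exists_lt_of_csInf_lt (nonempty_setOf_le_cdf hp) h
  exact hs.trans (monotone_cdf μ hst.le)

theorem le_cdf_quantile (hp : p < 1) : p ≤ cdf μ (quantile μ p) :=
  ge_of_tendsto (((cdf μ).right_continuous _).mono_left (nhdsWithin_mono _ Ioi_subset_Ici_self))
    (eventually_mem_nhdsWithin.mono fun _ ht ↦ le_cdf_of_quantile_lt hp ht)

theorem quantile_le_iff (hp : p ∈ Ioo (0 : ℝ) 1) : quantile μ p ≤ t ↔ p ≤ cdf μ t :=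
  ⟨fun h ↦ (le_cdf_quantile hp.2).trans (monotone_cdf μ h),
    fun h ↦ csInf_le (bddBelow_setOf_le_cdf hp.1) h⟩

theorem lt_quantile_iff (hp : p ∈ Ioo (0 : ℝ) 1) : t < quantile μ p ↔ cdf μ t < p :=
  lt_iff_lt_of_le_iff_le (quantile_le_iff hp)

theorem monotoneOn_quantile : MonotoneOn (quantile μ) (Ioo 0 1) := fun _ hu _ hv huv ↦
  (quantile_le_iff hu).2 (huv.trans (le_cdf_quantile hv.2))

theorem setOf_lt_quantile_inter_Ioo (hp : p ≤ 1) :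
    {u | t < quantile μ u} ∩ Ioo 0 p = Ioo (cdf μ t) p := by
  ext u
  refine ⟨fun ⟨htu, hu⟩ ↦ ⟨(lt_quantile_iff ⟨hu.1, hu.2.trans_le hp⟩).1 htu, hu.2⟩,
    fun ⟨htu, hup⟩ ↦ ?_⟩
  have hu : 0 < u := (cdf_nonneg μ t).trans_lt htu
  exact ⟨(lt_quantile_iff ⟨hu, hup.trans_le hp⟩).2 htu, hu, hup⟩

theorem intervalIntegrable_one_sub_cdf (a b : ℝ) :
    IntervalIntegrable (fun s ↦ 1 - cdf μ s) volume a b :=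
  intervalIntegrable_const.sub (monotone_cdf μ).intervalIntegrable

theorem integral_one_sub_cdf_mono {s : ℝ} (hs : 0 ≤ s) (hst : s ≤ t) :
    ∫ r in (0 : ℝ)..s, (1 - cdf μ r) ≤ ∫ r in (0 : ℝ)..t, (1 - cdf μ r) :=
  intervalIntegral.integral_mono_interval le_rfl hs hst
    (ae_of_all _ fun r ↦ sub_nonneg.2 (cdf_le_one μ r)) (intervalIntegrable_one_sub_cdf 0 t)

variable [IsProbabilityMeasure μ]

theorem cdf_eq_zero_of_neg (hμ : ∀ᵐ x ∂μ, 0 ≤ x) (ht : t < 0) : cdf μ t = 0 := by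
  rw [cdf_eq_real, measureReal_eq_zero_iff, measure_eq_zero_iff_ae_notMem]
  filter_upwards [hμ] with x hx using not_le.2 (ht.trans_le hx)

theorem quantile_nonneg (hμ : ∀ᵐ x ∂μ, 0 ≤ x) (hp : p ∈ Ioo (0 : ℝ) 1) : 0 ≤ quantile μ p := by
  by_contra! h
  exact hp.1.not_ge ((le_cdf_quantile hp.2).trans_eq (cdf_eq_zero_of_neg hμ h))

theorem integrableOn_quantile (hμ : ∀ᵐ x ∂μ, 0 ≤ x) (hp : p ∈ Ioo (0 : ℝ) 1) :
    IntegrableOn (quantile μ) (Ioo 0 p) := by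
  have hsub : Ioo 0 p ⊆ Ioo (0 : ℝ) 1 := Ioo_subset_Ioo_right hp.2.le
  refine Integrable.of_bound (C := quantile μ p) (aemeasurable_restrict_of_monotoneOn
    measurableSet_Ioo (monotoneOn_quantile.mono hsub)).aestronglyMeasurable ?_
  filter_upwards [ae_restrict_mem measurableSet_Ioo] with u hu
  rw [Real.norm_of_nonneg (quantile_nonneg hμ (hsub hu))]
  exact monotoneOn_quantile (hsub hu) hp hu.2.le

theorem integral_quantile_eq_integral_sub_cdf (hμ : ∀ᵐ x ∂μ, 0 ≤ x) (hp : p ∈ Ioo (0 : ℝ) 1) :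
    ∫ u in (0 : ℝ)..p, quantile μ u = ∫ s in (0 : ℝ)..quantile μ p, (p - cdf μ s) := by
  have hnonneg : 0 ≤ᵐ[volume.restrict (Ioo 0 p)] quantile μ := by
    filter_upwards [ae_restrict_mem measurableSet_Ioo] with u hu
    exact quantile_nonneg hμ ⟨hu.1, hu.2.trans hp.2⟩
  calc ∫ u in (0 : ℝ)..p, quantile μ u
    _ = ∫ u in Ioo 0 p, quantile μ u := by
      rw [intervalIntegral.integral_of_le hp.1.le, integral_Ioc_eq_integral_Ioo]
    _ = ∫ s in Ioi 0, (volume.restrict (Ioo 0 p)).real {u | s < quantile μ u} :=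
      (integrableOn_quantile hμ hp).integral_eq_integral_meas_lt hnonneg
    _ = ∫ s in Ioi 0, max (p - cdf μ s) 0 := by
      simp only [measureReal_restrict_apply' measurableSet_Ioo,
        setOf_lt_quantile_inter_Ioo hp.2.le, Real.volume_real_Ioo]
    _ = ∫ s in Ioo 0 (quantile μ p), max (p - cdf μ s) 0 := by
      refine setIntegral_eq_of_subset_of_forall_sdiff_eq_zero measurableSet_Ioi
        Ioo_subset_Ioi_self fun s hs ↦ max_eq_right (sub_nonpos.2 ?_)
      exact (quantile_le_iff hp).1 (not_lt.1 fun h ↦ hs.2 ⟨hs.1, h⟩)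
    _ = ∫ s in Ioo 0 (quantile μ p), (p - cdf μ s) :=
      setIntegral_congr_fun measurableSet_Ioo fun s hs ↦
        max_eq_left (sub_nonneg.2 ((lt_quantile_iff hp).1 hs.2).le)
    _ = ∫ s in (0 : ℝ)..quantile μ p, (p - cdf μ s) := by
      rw [intervalIntegral.integral_of_le (quantile_nonneg hμ hp), integral_Ioc_eq_integral_Ioo]

theorem one_sub_mul_quantile_add_integral_quantile (hμ : ∀ᵐ x ∂μ, 0 ≤ x)
    (hp : p ∈ Ioo (0 : ℝ) 1) :
    (1 - p) * quantile μ p + ∫ u in (0 : ℝ)..p, quantile μ u =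
      ∫ s in (0 : ℝ)..quantile μ p, (1 - cdf μ s) := by
  have hcdf : IntervalIntegrable (cdf μ) volume 0 (quantile μ p) :=
    (monotone_cdf μ).intervalIntegrable
  rw [integral_quantile_eq_integral_sub_cdf hμ hp,
    intervalIntegral.integral_sub intervalIntegrable_const hcdf,
    intervalIntegral.integral_sub intervalIntegrable_const hcdf,
    intervalIntegral.integral_const, intervalIntegral.integral_const]
  simp only [smul_eq_mul]
  ring

theorem integral_eq_integral_Ioi_one_sub_cdf (hμ : ∀ᵐ x ∂μ, 0 ≤ x)
    (hint : Integrable (fun x ↦ x) μ) :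
    ∫ x, x ∂μ = ∫ s in Ioi 0, (1 - cdf μ s) := by
  rw [hint.integral_eq_integral_meas_lt hμ]
  congr with s
  rw [cdf_eq_real, ← probReal_compl_eq_one_sub measurableSet_Iic, compl_Iic]
  rfl

theorem integral_one_sub_cdf_eq_integral_of_cdf_eq_one (hμ : ∀ᵐ x ∂μ, 0 ≤ x)
    (hint : Integrable (fun x ↦ x) μ) (ht : 0 ≤ t) (hcdf : cdf μ t = 1) :
    ∫ s in (0 : ℝ)..t, (1 - cdf μ s) = ∫ x, x ∂μ := by
  rw [integral_eq_integral_Ioi_one_sub_cdf hμ hint, intervalIntegral.integral_of_le ht]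
  refine (setIntegral_eq_of_subset_of_forall_sdiff_eq_zero measurableSet_Ioi
    Ioc_subset_Ioi_self fun s hs ↦ sub_eq_zero.2 ?_).symm
  have hts : t ≤ s := (not_le.1 fun h ↦ hs.2 ⟨hs.1, h⟩).le
  exact (hcdf.ge.trans (monotone_cdf μ hts)).antisymm (cdf_le_one μ s)

theorem exists_quantile_lt_of_integral_one_sub_cdf_lt (hμ : ∀ᵐ x ∂μ, 0 ≤ x)
    (hint : Integrable (fun x ↦ x) μ) (ht : 0 ≤ t) (hcdf : 0 < cdf μ t)
    (h : ∫ s in (0 : ℝ)..t, (1 - cdf μ s) < cdf μ t * ∫ x, x ∂μ) :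
    ∃ p ∈ Ioo (0 : ℝ) 1,
      (1 - p) * quantile μ p + ∫ u in (0 : ℝ)..p, quantile μ u < p * ∫ x, x ∂μ := by
  have hcdf_ne : cdf μ t ≠ 1 := fun hone ↦ by
    rw [integral_one_sub_cdf_eq_integral_of_cdf_eq_one hμ hint ht hone, hone, one_mul] at h
    exact h.false
  have hp : cdf μ t ∈ Ioo (0 : ℝ) 1 := ⟨hcdf, (cdf_le_one μ t).lt_of_ne hcdf_ne⟩
  refine ⟨cdf μ t, hp, ?_⟩
  rw [one_sub_mul_quantile_add_integral_quantile hμ hp]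
  have hQt : quantile μ (cdf μ t) ≤ t := (quantile_le_iff hp).2 le_rfl
  exact (integral_one_sub_cdf_mono (quantile_nonneg hμ hp) hQt).trans_lt h

theorem exists_integral_one_sub_cdf_lt_of_quantile_lt (hμ : ∀ᵐ x ∂μ, 0 ≤ x) {m : ℝ} (hm : 0 ≤ m)
    (hp : p ∈ Ioo (0 : ℝ) 1)
    (h : (1 - p) * quantile μ p + ∫ u in (0 : ℝ)..p, quantile μ u < p * m) :
    ∃ t > 0, 0 < cdf μ t ∧ ∫ s in (0 : ℝ)..t, (1 - cdf μ s) < cdf μ t * m := by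
  rw [one_sub_mul_quantile_add_integral_quantile hμ hp] at h
  have hcont : Continuous fun t ↦ ∫ s in (0 : ℝ)..t, (1 - cdf μ s) :=
    intervalIntegral.continuous_primitive intervalIntegrable_one_sub_cdf 0
  have hnear : ∀ᶠ t in 𝓝[>] quantile μ p, ∫ s in (0 : ℝ)..t, (1 - cdf μ s) < p * m :=
    ((hcont.tendsto _).eventually_lt_const h).filter_mono nhdsWithin_le_nhds
  -- `Q(p)` may be `0`, so the restart time is taken slightly larger.
  obtain ⟨t, hlt, ht⟩ := (hnear.and eventually_mem_nhdsWithin).exists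
  have hpt : p ≤ cdf μ t := le_cdf_of_quantile_lt hp.2 ht
  exact ⟨t, (quantile_nonneg hμ hp).trans_lt ht, hp.1.trans_le hpt,
    hlt.trans_le (mul_le_mul_of_nonneg_right hpt hm)⟩

end

theorem cdf_map_eq_toReal {Ω : Type*} [MeasurableSpace Ω] {P : Measure Ω} [IsProbabilityMeasure P]
    {X : Ω → ℝ} (hX : AEMeasurable X P) (t : ℝ) :
    cdf (P.map X) t = (P {ω | X ω ≤ t}).toReal := by
  have := Measure.isProbabilityMeasure_map hX
  rw [cdf_eq_real, map_measureReal_apply_of_aemeasurable hX measurableSet_Iic]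
  rfl

theorem stmt_12_general {Ω : Type*} [MeasurableSpace Ω] {P : Measure Ω} [IsProbabilityMeasure P]
    {X : Ω → ℝ} (hX_nonneg : ∀ᵐ ω ∂P, 0 ≤ X ω) (hX_int : Integrable X P)
    {F : ℝ → ℝ} (hF : ∀ t, F t = (P {ω | X ω ≤ t}).toReal)
    {Q : ℝ → ℝ} (hQ : ∀ p ∈ Ioo (0 : ℝ) 1, Q p = sInf {t : ℝ | p ≤ F t}) :
    (∃ t > (0 : ℝ), 0 < F t ∧ (∫ s in (0 : ℝ)..t, (1 - F s)) < F t * ∫ ω, X ω ∂P) ↔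
    (∃ p ∈ Ioo (0 : ℝ) 1,
      (1 - p) * Q p + ∫ u in (0 : ℝ)..p, Q u < p * ∫ ω, X ω ∂P) := by
  have hX : AEMeasurable X P := hX_int.aemeasurable
  have := Measure.isProbabilityMeasure_map hX
  obtain rfl : F = cdf (P.map X) := funext fun t ↦ (hF t).trans (cdf_map_eq_toReal hX t).symm
  have hμ : ∀ᵐ x ∂P.map X, 0 ≤ x := (ae_map_iff hX measurableSet_Ici).2 hX_nonneg
  have hint : Integrable (fun x ↦ x) (P.map X) :=
    (integrable_map_measure aestronglyMeasurable_id hX).2 hX_int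
  have hmean : ∫ x, x ∂P.map X = ∫ ω, X ω ∂P := integral_map hX aestronglyMeasurable_id
  have hQ_integral : ∀ p ∈ Ioo (0 : ℝ) 1,
      ∫ u in (0 : ℝ)..p, Q u = ∫ u in (0 : ℝ)..p, quantile (P.map X) u := fun p hp ↦
    intervalIntegral.integral_congr_Ioo_of_le hp.1.le fun u hu ↦ hQ u ⟨hu.1, hu.2.trans hp.2⟩
  rw [← hmean]
  constructor
  · rintro ⟨t, ht, hFt, h⟩
    obtain ⟨p, hp, h⟩ := exists_quantile_lt_of_integral_one_sub_cdf_lt hμ hint ht.le hFt h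
    exact ⟨p, hp, by rwa [hQ p hp, hQ_integral p hp]⟩
  · rintro ⟨p, hp, h⟩
    rw [hQ p hp, hQ_integral p hp] at h
    exact exists_integral_one_sub_cdf_lt_of_quantile_lt hμ (integral_nonneg_of_ae hμ) hp h

theorem stmt_12 {Ω : Type*} [MeasureSpace Ω] [IsProbabilityMeasure (ℙ : Measure Ω)]
    (X : Ω → ℝ) (hX : Measurable X) (hXpos : ∀ ω, 0 < X ω)
    (F : ℝ → ℝ) (hF : ∀ t, F t = (ℙ {ω | X ω ≤ t}).toReal)
    (f : ℝ → ℝ) (hf_nonneg : ∀ t ∈ Set.Ioi (0:ℝ), 0 ≤ f t)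
    (hf_int : IntegrableOn f (Set.Ioi (0:ℝ)))
    (hpdf : ∀ t, 0 ≤ t → F t = ∫ u in (0:ℝ)..t, f u)
    (hf_cont : ContinuousOn f (Set.Ioi (0:ℝ)))
    (hf_pos : ∀ t ∈ Set.Ioi (0:ℝ), 0 < f t)
    (Q : ℝ → ℝ) (hQ : ∀ p ∈ Set.Ioo (0:ℝ) 1, Q p = sInf {t : ℝ | p ≤ F t})
    (hXint : Integrable X)
    (hEpos : 0 < ∫ ω, X ω) :
    (∃ t > (0:ℝ), 0 < F t ∧ (∫ s in (0:ℝ)..t, (1 - F s)) < F t * ∫ ω, X ω) ↔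
    (∃ p ∈ Set.Ioo (0:ℝ) 1,
      (1 - p) * Q p + ∫ u in (0:ℝ)..p, Q u < p * ∫ ω, X ω) :=
  stmt_12_general (ae_of_all _ fun ω ↦ (hXpos ω).le) hXint hF hQ
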